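/- Let ρ_0 and ρ_1 be density matrices on ℂ^d. Then sup over pairs (M_0, M_1) of positive semidefinite d×d matrices with M_0 + M_1 = I of (1/2)(Tr(M_0 ρ_0) + Tr(M_1 ρ_1)) equals inf over Hermitian d×d matrices Q such that Q − ρ_0 and Q − ρ_1 are both positive semidefinite of (1/2)·Tr(Q). (Strong duality of the state-discrimination semidefinite program.) -/

import Mathlib

open scoped BigOperators ComplexOrder

/-!
If `∑ i, M i = 1` with `M i ≥ 0`, and `Q ≥ A i` for all `i`, then
`Tr Q - ∑ i, Tr (M i * A i) = ∑ i, Tr (M i * (Q - A i)) ≥ 0`; this is weak duality.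
For a pair of Hermitian matrices it is tight: let `E` be the projection onto the positive
eigenspaces of `A₀ - A₁`, so that `E * (A₀ - A₁) = (A₀ - A₁)⁺`. The measurement `(E, 1 - E)` has
value `Tr (E * A₀ + (1 - E) * A₁) = Tr (A₁ + (A₀ - A₁)⁺)`, and
`A₁ + (A₀ - A₁)⁺ = A₀ + (A₀ - A₁)⁻` dominates both `A₀` and `A₁`.
-/

namespace StateDiscrimination

open scoped MatrixOrder

variable {n 𝕜 : Type*} [Fintype n] [RCLike 𝕜]

theorem trace_mul_nonneg_of_posSemidef {A B : Matrix n n 𝕜}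
    (hA : A.PosSemidef) (hB : B.PosSemidef) : 0 ≤ (A * B).trace := by
  classical
  obtain ⟨C, rfl⟩ := CStarAlgebra.nonneg_iff_eq_star_mul_self.mp hB.nonneg
  rw [Matrix.star_eq_conjTranspose, ← Matrix.mul_assoc, Matrix.trace_mul_comm, ← Matrix.mul_assoc]
  exact (hA.mul_mul_conjTranspose_same C).trace_nonneg

variable [DecidableEq n]

theorem trace_sub_sum_trace_mul {R ι : Type*} [Ring R] [Fintype ι] {M : ι → Matrix n n R}
    (hM : ∑ i, M i = 1) (A : ι → Matrix n n R) (Q : Matrix n n R) :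
    Q.trace - ∑ i, (M i * A i).trace = ∑ i, (M i * (Q - A i)).trace := by
  simp only [Matrix.mul_sub, Matrix.trace_sub, Finset.sum_sub_distrib, ← Matrix.trace_sum,
    ← Finset.sum_mul, hM, Matrix.one_mul]

theorem sum_trace_mul_le_trace {ι : Type*} [Fintype ι] {M A : ι → Matrix n n 𝕜}
    {Q : Matrix n n 𝕜} (hM : ∀ i, (M i).PosSemidef) (hM_sum : ∑ i, M i = 1)
    (hQ : ∀ i, (Q - A i).PosSemidef) : ∑ i, (M i * A i).trace ≤ Q.trace := by
  rw [← sub_nonneg, trace_sub_sum_trace_mul hM_sum]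
  exact Finset.sum_nonneg fun i _ ↦ trace_mul_nonneg_of_posSemidef (hM i) (hQ i)

/-- The orthogonal projection onto the span of the eigenvectors of a Hermitian matrix with positive
eigenvalues; it is the optimal measurement operator for `A₀` when applied to `A₀ - A₁`. The
functional calculus makes it `0` at non-Hermitian matrices. -/
noncomputable def positiveSpectralProjection (A : Matrix n n 𝕜) : Matrix n n 𝕜 :=
  cfc (Set.indicator (Set.Ioi (0 : ℝ)) 1) A

theorem posSemidef_positiveSpectralProjection (A : Matrix n n 𝕜) :
    (positiveSpectralProjection A).PosSemidef :=
  Matrix.nonneg_iff_posSemidef.mp <|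
    cfc_nonneg fun x _ ↦ Set.indicator_nonneg (fun _ _ ↦ zero_le_one) x

theorem posSemidef_one_sub_positiveSpectralProjection (A : Matrix n n 𝕜) :
    (1 - positiveSpectralProjection A).PosSemidef :=
  Matrix.le_iff.mp <| cfc_le_one _ A fun x _ ↦
    Set.indicator_le_self' (fun _ _ ↦ zero_le_one) x

theorem positiveSpectralProjection_mul_self {A : Matrix n n 𝕜} (hA : A.IsHermitian) :
    positiveSpectralProjection A * A = A⁺ := by
  have hA' : IsSelfAdjoint A := hA
  have hcont (f : ℝ → ℝ) : ContinuousOn f (spectrum ℝ A) := A.finite_real_spectrum.continuousOn f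
  calc positiveSpectralProjection A * A
      = cfc (Set.indicator (Set.Ioi (0 : ℝ)) 1) A * cfc (fun x : ℝ ↦ x) A := by
        rw [cfc_id' ℝ A, positiveSpectralProjection]
    _ = cfc (fun x : ℝ ↦ Set.indicator (Set.Ioi 0) 1 x * x) A :=
        (cfc_mul _ _ A (hcont _) (hcont _)).symm
    _ = cfc (fun x : ℝ ↦ x⁺) A := cfc_congr fun x _ ↦ by
        rcases le_or_gt x 0 with hx | hx
        · simp [hx]
        · simp [hx, hx.le]
    _ = A⁺ := by rw [CFC.posPart_def, cfcₙ_eq_cfc]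

/-- The optimal dual variable: for Hermitian `A₀` and `A₁`, an upper bound of both in the Loewner
order with the least possible trace. It equals `A₀ + (A₀ - A₁)⁻` in that case. -/
noncomputable def helstromOperator (A₀ A₁ : Matrix n n 𝕜) : Matrix n n 𝕜 :=
  A₁ + (A₀ - A₁)⁺

variable {A₀ A₁ : Matrix n n 𝕜}

theorem le_helstromOperator_left (h₀ : A₀.IsHermitian) (h₁ : A₁.IsHermitian) :
    A₀ ≤ helstromOperator A₀ A₁ :=
  have hsub : IsSelfAdjoint (A₀ - A₁) := h₀.sub h₁
  sub_le_iff_le_add'.mp (CFC.le_posPart hsub)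

theorem le_helstromOperator_right (A₀ A₁ : Matrix n n 𝕜) : A₁ ≤ helstromOperator A₀ A₁ :=
  le_add_of_nonneg_right (CFC.posPart_nonneg (A₀ - A₁))

theorem isHermitian_helstromOperator (A₀ : Matrix n n 𝕜) (h₁ : A₁.IsHermitian) :
    (helstromOperator A₀ A₁).IsHermitian :=
  h₁.add (Matrix.nonneg_iff_posSemidef.mp (CFC.posPart_nonneg (A₀ - A₁))).isHermitian

theorem positiveSpectralProjection_mul_add (h₀ : A₀.IsHermitian) (h₁ : A₁.IsHermitian) :
    positiveSpectralProjection (A₀ - A₁) * A₀ + (1 - positiveSpectralProjection (A₀ - A₁)) * A₁ =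
      helstromOperator A₀ A₁ := by
  rw [helstromOperator, ← positiveSpectralProjection_mul_self (h₀.sub h₁)]
  noncomm_ring

/-- The objective values of the primal program: the success probabilities of two-outcome
measurements `(M₀, M₁)` when `A₀` and `A₁` are equally likely density matrices. -/
def primalValues (A₀ A₁ : Matrix n n 𝕜) : Set ℝ :=
  {p | ∃ M₀ M₁ : Matrix n n 𝕜, M₀.PosSemidef ∧ M₁.PosSemidef ∧ M₀ + M₁ = 1 ∧
    p = (1 / 2) * (RCLike.re (M₀ * A₀).trace + RCLike.re (M₁ * A₁).trace)}

/-- The objective values of the dual program: the half-traces of Hermitian upper bounds `Q` of `A₀`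
and `A₁` in the Loewner order. -/
def dualValues (A₀ A₁ : Matrix n n 𝕜) : Set ℝ :=
  {q | ∃ Q : Matrix n n 𝕜, Q.IsHermitian ∧ (Q - A₀).PosSemidef ∧ (Q - A₁).PosSemidef ∧
    q = (1 / 2) * RCLike.re Q.trace}

theorem le_of_mem_primalValues_of_mem_dualValues {p q : ℝ} (hp : p ∈ primalValues A₀ A₁)
    (hq : q ∈ dualValues A₀ A₁) : p ≤ q := by
  obtain ⟨M₀, M₁, hM₀, hM₁, hM, rfl⟩ := hp
  obtain ⟨Q, -, hQ₀, hQ₁, rfl⟩ := hq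
  have htrace : (M₀ * A₀).trace + (M₁ * A₁).trace ≤ Q.trace := by
    simpa using sum_trace_mul_le_trace (M := ![M₀, M₁]) (A := ![A₀, A₁]) (Q := Q)
      (by simp [Fin.forall_fin_two, hM₀, hM₁]) (by simp [hM])
      (by simp [Fin.forall_fin_two, hQ₀, hQ₁])
  rw [← map_add]
  exact mul_le_mul_of_nonneg_left (RCLike.le_iff_re_im.mp htrace).1 one_half_pos.le

/-- The common optimal value of the two programs (the Holevo–Helstrom bound when `A₀` and `A₁` are
density matrices). -/
noncomputable def helstromValue (A₀ A₁ : Matrix n n 𝕜) : ℝ :=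
  (1 / 2) * RCLike.re (helstromOperator A₀ A₁).trace

theorem helstromValue_mem_primalValues (h₀ : A₀.IsHermitian) (h₁ : A₁.IsHermitian) :
    helstromValue A₀ A₁ ∈ primalValues A₀ A₁ := by
  refine ⟨positiveSpectralProjection (A₀ - A₁), 1 - positiveSpectralProjection (A₀ - A₁),
    posSemidef_positiveSpectralProjection _, posSemidef_one_sub_positiveSpectralProjection _,
    add_sub_cancel _ _, ?_⟩
  rw [← map_add, ← Matrix.trace_add, positiveSpectralProjection_mul_add h₀ h₁, helstromValue]

theorem helstromValue_mem_dualValues (h₀ : A₀.IsHermitian) (h₁ : A₁.IsHermitian) :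
    helstromValue A₀ A₁ ∈ dualValues A₀ A₁ :=
  ⟨helstromOperator A₀ A₁, isHermitian_helstromOperator A₀ h₁,
    Matrix.le_iff.mp (le_helstromOperator_left h₀ h₁),
    Matrix.le_iff.mp (le_helstromOperator_right A₀ A₁), rfl⟩

theorem isGreatest_primalValues (h₀ : A₀.IsHermitian) (h₁ : A₁.IsHermitian) :
    IsGreatest (primalValues A₀ A₁) (helstromValue A₀ A₁) :=
  ⟨helstromValue_mem_primalValues h₀ h₁, fun _ hp ↦
    le_of_mem_primalValues_of_mem_dualValues hp (helstromValue_mem_dualValues h₀ h₁)⟩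

theorem isLeast_dualValues (h₀ : A₀.IsHermitian) (h₁ : A₁.IsHermitian) :
    IsLeast (dualValues A₀ A₁) (helstromValue A₀ A₁) :=
  ⟨helstromValue_mem_dualValues h₀ h₁, fun _ hq ↦
    le_of_mem_primalValues_of_mem_dualValues (helstromValue_mem_primalValues h₀ h₁) hq⟩

end StateDiscrimination

open StateDiscrimination in
theorem state_discrimination_sdp_duality_general {n 𝕜 : Type*} [Fintype n] [DecidableEq n]
    [RCLike 𝕜] {A₀ A₁ : Matrix n n 𝕜} (h₀ : A₀.IsHermitian) (h₁ : A₁.IsHermitian) :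
    sSup (primalValues A₀ A₁) = sInf (dualValues A₀ A₁) :=
  (isGreatest_primalValues h₀ h₁).csSup_eq.trans (isLeast_dualValues h₀ h₁).csInf_eq.symm

theorem state_discrimination_sdp_duality
    (d : ℕ) (hd : 1 ≤ d) (ρ₀ ρ₁ : Matrix (Fin d) (Fin d) ℂ)
    (h₀ : ρ₀.PosSemidef) (h₁ : ρ₁.PosSemidef)
    (t₀ : ρ₀.trace = 1) (t₁ : ρ₁.trace = 1) :
    sSup { p : ℝ | ∃ M₀ M₁ : Matrix (Fin d) (Fin d) ℂ,
        M₀.PosSemidef ∧ M₁.PosSemidef ∧ M₀ + M₁ = 1 ∧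
        p = (1 / 2) * (((M₀ * ρ₀).trace).re + ((M₁ * ρ₁).trace).re) }
    = sInf { q : ℝ | ∃ Q : Matrix (Fin d) (Fin d) ℂ, Q.IsHermitian ∧
        (Q - ρ₀).PosSemidef ∧ (Q - ρ₁).PosSemidef ∧
        q = (1 / 2) * (Q.trace).re } :=
  state_discrimination_sdp_duality_general h₀.isHermitian h₁.isHermitian
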